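/- Under Condition (★), for every integer h ≥ 2 there is a constant C (depending only on h and on the data P, N, κ, θ) such that for all sufficiently large real x, | #𝒩_h(x) − κ·γ_h·x^{1/h} | ≤ C·R_{N_h}(x), where R_{N_h}(x) := x^{θ/h} if h/(h+1) < θ; R_{N_h}(x) := x^{1/(h+1)}·log x if θ = h/(h+i) for some i ∈ {1,…,h−1}; and R_{N_h}(x) := x^{1/(h+1)} if h/(h+1) > θ and θ ≠ h/(h+i) for all i ∈ {1,…,h−1}. -/

import Mathlib

open Filter Topology Asymptotics
open scoped Classical

noncomputable section

/-- The norm on the free abelian monoid `P →₀ ℕ`, extended multiplicatively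
from the norm `N` on the prime elements. -/
def Nm {P : Type*} (N : P → ℕ) (m : P →₀ ℕ) : ℕ :=
  m.prod fun p k => N p ^ k

/-- The number of distinct prime elements generating `m`. -/
def omegaM {P : Type*} (m : P →₀ ℕ) : ℕ := m.support.card

/-- `m` is `h`-free: every multiplicity is at most `h - 1`. -/
def HFree {P : Type*} (h : ℕ) (m : P →₀ ℕ) : Prop := ∀ p, m p ≤ h - 1

/-- `m` is `h`-full: every nonzero multiplicity is at least `h`. -/
def HFull {P : Type*} (h : ℕ) (m : P →₀ ℕ) : Prop := ∀ p, m p = 0 ∨ h ≤ m p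

/-- Condition (★): `#{m : N(m) ≤ x} = κ·x + O(x^θ)` with `κ > 0`, `0 ≤ θ < 1`. -/
def StarCond {P : Type*} (N : P → ℕ) (κ θ : ℝ) : Prop :=
  0 < κ ∧ 0 ≤ θ ∧ θ < 1 ∧
    (fun x : ℝ => (({m : P →₀ ℕ | (Nm N m : ℝ) ≤ x}.ncard : ℝ) - κ * x))
      =O[atTop] fun x : ℝ => x ^ θ

/-- The generalized zeta function `ζ_M(s) = ∑_m N(m)^{-s}`. -/
def zetaM {P : Type*} (N : P → ℕ) (s : ℝ) : ℝ :=
  ∑' m : P →₀ ℕ, 1 / (Nm N m : ℝ) ^ s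

/-- The constant `γ_h`. -/
def gammah {P : Type*} (N : P → ℕ) (h : ℕ) : ℝ :=
  ∏' p : P, (1 + ((N p : ℝ) - (N p : ℝ) ^ (1 / (h : ℝ))) /
    ((N p : ℝ) ^ 2 * ((N p : ℝ) ^ (1 / (h : ℝ)) - 1)))

/-- `A` is the Mertens constant `𝔄` of the prime system:
`𝔄 = lim (∑_{N(p) ≤ x} 1/N(p) − log log x)`. -/
def IsMertens {P : Type*} (N : P → ℕ) (A : ℝ) : Prop :=
  Tendsto (fun x : ℝ =>
      (∑ᶠ p ∈ {p : P | (N p : ℝ) ≤ x}, 1 / (N p : ℝ)) - Real.log (Real.log x))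
    atTop (𝓝 A)

/-- The constant `𝔅 = -π²/6`. -/
def Bconst : ℝ := -(Real.pi ^ 2) / 6

/-- The constant `ℭ₁`, given the Mertens constant `A`. -/
def C1const {P : Type*} (N : P → ℕ) (h : ℕ) (A : ℝ) : ℝ :=
  A - ∑' p : P, ((N p : ℝ) - 1) / ((N p : ℝ) * ((N p : ℝ) ^ h - 1))

/-- The constant `ℭ₂`, given the Mertens constant `A`. -/
def C2const {P : Type*} (N : P → ℕ) (h : ℕ) (A : ℝ) : ℝ :=
  C1const N h A ^ 2 + C1const N h A + Bconst -
    ∑' p : P, (((N p : ℝ) ^ (h - 1) - 1) / ((N p : ℝ) ^ h - 1)) ^ 2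

/-- The convergent series `𝔏_h(r)`. -/
def LhSum {P : Type*} (N : P → ℕ) (h : ℕ) (r : ℝ) : ℝ :=
  ∑' p : P, 1 / ((N p : ℝ) ^ (r / (h : ℝ) - 1) *
    ((N p : ℝ) - (N p : ℝ) ^ (1 - 1 / (h : ℝ)) + 1))

/-- The constant `𝔇₁`, given the Mertens constant `A`. -/
def D1const {P : Type*} (N : P → ℕ) (h : ℕ) (A : ℝ) : ℝ :=
  A - Real.log (h : ℝ) + LhSum N h ((h : ℝ) + 1) - LhSum N h (2 * (h : ℝ))

/-- The constant `𝔇₂`, given the Mertens constant `A`. -/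
def D2const {P : Type*} (N : P → ℕ) (h : ℕ) (A : ℝ) : ℝ :=
  D1const N h A ^ 2 + D1const N h A + Bconst -
    ∑' p : P, (1 / ((N p : ℝ) - (N p : ℝ) ^ (1 - 1 / (h : ℝ)) + 1)) ^ 2

/-- The error term `R_{S_h}(x)` for `h`-free counts. -/
def RSfree (h : ℕ) (θ : ℝ) (x : ℝ) : ℝ :=
  if 1 / (h : ℝ) < θ then x ^ θ
  else if 1 / (h : ℝ) = θ then x ^ (1 / (h : ℝ)) * Real.log x
  else x ^ (1 / (h : ℝ))

/-- The error term `R_{N_h}(x)` for `h`-full counts. -/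
def RNfull (h : ℕ) (θ : ℝ) (x : ℝ) : ℝ :=
  if (h : ℝ) / ((h : ℝ) + 1) < θ then x ^ (θ / (h : ℝ))
  else if ∃ i : ℕ, 1 ≤ i ∧ i ≤ h - 1 ∧ θ = (h : ℝ) / ((h : ℝ) + (i : ℝ)) then
    x ^ (1 / ((h : ℝ) + 1)) * Real.log x
  else x ^ (1 / ((h : ℝ) + 1))

/-!
Every `h`-full `m` is uniquely `h • a + b` with all multiplicities of `b` in `{0} ∪ (h, 2h)`, so the
number of `h`-full `m` with `N(m) ≤ x` is the sum over `b` of `I((x / N(b)) ^ (1 / h))`. Inserting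
(★) gives the main term `κ x ^ (1 / h) ∑ N(b) ^ (-1 / h)`, and the full series over `b` is the Euler
product `γ_h`. The elements `b` are `(h + 1)`-full, hence only `O(x ^ (1 / (h + 1)))` of them have
norm at most `x`; cutting dyadically, this bounds both the tail of the series and the sum
`x ^ (θ / h) ∑ N(b) ^ (-θ / h)` of the remainders. The latter is dominated by small `b`, by large
`b` or by neither, according as `θ / h` is greater than, less than or equal to `1 / (h + 1)`.
-/

open Set (Ici Icc)

section PolynomialGrowth

variable {ι : Type*} {g : ι → ℝ} {α β : ℝ}

/-- The indices `i` with `g i ≤ x`, as a finset; it is empty, by convention, when there are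
infinitely many of them. -/
def sublevel (g : ι → ℝ) (x : ℝ) : Finset ι :=
  if hfin : {i | g i ≤ x}.Finite then hfin.toFinset else ∅

lemma mem_sublevel (hfin : ∀ x, {i | g i ≤ x}.Finite) {x : ℝ} {i : ι} :
    i ∈ sublevel g x ↔ g i ≤ x := by
  simp [sublevel, hfin x]

lemma card_sublevel (g : ι → ℝ) (x : ℝ) : (sublevel g x).card = {i | g i ≤ x}.ncard := by
  unfold sublevel
  split_ifs with hfin
  · exact (Set.ncard_eq_toFinset_card _ hfin).symm
  · exact (Set.Infinite.ncard hfin).symm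

/-- A norm `g` has growth of order at most `α` if `g i ≤ x` holds for finitely many, indeed for
`O(x ^ α)`, indices `i`. The bound is uniform on `[1, ∞)` rather than asymptotic, because it gets
applied to all the quotients `x / g i ≥ 1`. -/
structure GrowthLE (g : ι → ℝ) (α : ℝ) : Prop where
  finite_le : ∀ x, {i | g i ≤ x}.Finite
  card_isBigO : (fun x ↦ ((sublevel g x).card : ℝ)) =O[𝓟 (Ici 1)] fun x ↦ x ^ α

lemma exists_abs_le_mul_rpow {f : ℝ → ℝ} (hf : f =O[𝓟 (Ici 1)] fun x ↦ x ^ α) :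
    ∃ C, 0 ≤ C ∧ ∀ x, 1 ≤ x → |f x| ≤ C * x ^ α := by
  obtain ⟨C, hC, hbound⟩ := hf.exists_nonneg
  refine ⟨C, hC, fun x hx ↦ ?_⟩
  have hx_bound := eventually_principal.1 hbound.bound x hx
  rwa [Real.norm_eq_abs, Real.norm_of_nonneg (by positivity)] at hx_bound

lemma isBigO_of_abs_le {f F : ℝ → ℝ} (C : ℝ) (hf : ∀ x, 1 ≤ x → |f x| ≤ C * F x)
    (hF : ∀ x, 1 ≤ x → 0 ≤ F x) : f =O[𝓟 (Ici 1)] F := by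
  refine isBigO_principal.2 ⟨C, fun x hx ↦ ?_⟩
  rw [Real.norm_of_nonneg (hF x hx)]
  exact hf x hx

lemma rpow_isBigO_rpow (hαβ : α ≤ β) : (fun x : ℝ ↦ x ^ α) =O[𝓟 (Ici 1)] fun x ↦ x ^ β :=
  isBigO_of_abs_le 1 (fun x hx ↦ by
    rw [abs_of_nonneg (by positivity), one_mul]
    exact Real.rpow_le_rpow_of_exponent_le hx hαβ) fun x hx ↦ by positivity

lemma GrowthLE.exists_card_le (hg : GrowthLE g α) :
    ∃ A, 0 ≤ A ∧ ∀ (s : Finset ι) (y : ℝ), 1 ≤ y → (∀ i ∈ s, g i ≤ y) →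
      (s.card : ℝ) ≤ A * y ^ α := by
  obtain ⟨A, hA, hcard⟩ := exists_abs_le_mul_rpow hg.card_isBigO
  refine ⟨A, hA, fun s y hy hs ↦ le_trans ?_ ((le_abs_self _).trans (hcard y hy))⟩
  exact_mod_cast Finset.card_le_card fun i hi ↦ (mem_sublevel hg.finite_le).2 (hs i hi)

lemma GrowthLE.comp_injective (hg : GrowthLE g α) {κ : Type*} {e : κ → ι}
    (he : Function.Injective e) : GrowthLE (g ∘ e) α := by
  have hfin (x : ℝ) : {k | (g ∘ e) k ≤ x}.Finite := (hg.finite_le x).preimage he.injOn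
  obtain ⟨A, -, hcard⟩ := hg.exists_card_le
  refine ⟨hfin, isBigO_of_abs_le A (fun x hx ↦ ?_) fun x hx ↦ by positivity⟩
  rw [Nat.abs_cast, ← Finset.card_map ⟨e, he⟩]
  refine hcard _ x hx fun i hi ↦ ?_
  obtain ⟨k, hk, rfl⟩ := Finset.mem_map.1 hi
  exact (mem_sublevel hfin).1 hk

/-- The index `j` of the dyadic interval `[2 ^ j, 2 ^ (j + 1))` containing `y ≥ 1`. -/
def dyadicLevel (y : ℝ) : ℕ := Nat.log 2 ⌊y⌋₊

lemma dyadicLevel_mono : Monotone dyadicLevel :=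
  fun _ _ hxy ↦ Nat.log_mono_right (Nat.floor_mono hxy)

lemma two_pow_dyadicLevel_le {y : ℝ} (hy : 1 ≤ y) : (2 : ℝ) ^ dyadicLevel y ≤ y := by
  have hfloor : ⌊y⌋₊ ≠ 0 := (Nat.floor_pos.2 hy).ne'
  exact_mod_cast (Nat.le_floor_iff (by linarith)).1 (Nat.pow_log_le_self 2 hfloor)

lemma lt_two_pow_dyadicLevel_succ {y : ℝ} (hy : 0 ≤ y) : y < (2 : ℝ) ^ (dyadicLevel y + 1) := by
  exact_mod_cast (Nat.floor_lt hy).1 (Nat.lt_pow_succ_log_self one_lt_two ⌊y⌋₊)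

lemma dyadicLevel_le_log_div {x : ℝ} (hx : 1 ≤ x) :
    (dyadicLevel x : ℝ) ≤ Real.log x / Real.log 2 := by
  rw [le_div_iff₀ (Real.log_pos one_lt_two), ← Real.log_pow]
  exact Real.log_le_log (by positivity) (two_pow_dyadicLevel_le hx)

/-- Each dyadic block `2 ^ j ≤ g i < 2 ^ (j + 1)` has `O(2 ^ (j * α))` terms of size at most
`2 ^ (-j * β)`. -/
lemma GrowthLE.exists_sum_rpow_neg_le_geom (hg : GrowthLE g α) (hg1 : ∀ i, 1 ≤ g i) (hβ : 0 ≤ β) :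
    ∃ A, 0 ≤ A ∧ ∀ (s : Finset ι) (J : Finset ℕ), (∀ i ∈ s, dyadicLevel (g i) ∈ J) →
      ∑ i ∈ s, g i ^ (-β) ≤ A * ∑ j ∈ J, ((2 : ℝ) ^ (α - β)) ^ j := by
  obtain ⟨A, hA, hcard⟩ := hg.exists_card_le
  refine ⟨A * 2 ^ α, by positivity, fun s J hsJ ↦ ?_⟩
  rw [← Finset.sum_fiberwise_of_maps_to hsJ, Finset.mul_sum]
  refine Finset.sum_le_sum fun j _ ↦ ?_
  set block := s.filter fun i ↦ dyadicLevel (g i) = j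
  have hlower : ∀ i ∈ block, g i ^ (-β) ≤ ((2 : ℝ) ^ j) ^ (-β) := fun i hi ↦ by
    obtain ⟨-, rfl⟩ := Finset.mem_filter.1 hi
    exact Real.rpow_le_rpow_of_nonpos (by positivity) (two_pow_dyadicLevel_le (hg1 i))
      (neg_nonpos.2 hβ)
  have hupper : ∀ i ∈ block, g i ≤ (2 : ℝ) ^ (j + 1) := fun i hi ↦ by
    obtain ⟨-, rfl⟩ := Finset.mem_filter.1 hi
    exact (lt_two_pow_dyadicLevel_succ (zero_le_one.trans (hg1 i))).le
  calc ∑ i ∈ block, g i ^ (-β) ≤ block.card * ((2 : ℝ) ^ j) ^ (-β) := by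
        simpa only [nsmul_eq_mul] using Finset.sum_le_card_nsmul _ _ _ hlower
    _ ≤ A * ((2 : ℝ) ^ (j + 1)) ^ α * ((2 : ℝ) ^ j) ^ (-β) := by
        gcongr
        exact hcard block _ (one_le_pow₀ one_le_two) hupper
    _ = A * 2 ^ α * ((2 : ℝ) ^ (α - β)) ^ j := by
        rw [Real.rpow_pow_comm zero_le_two, pow_succ, Real.mul_rpow (by positivity) zero_le_two,
          sub_eq_add_neg, Real.rpow_add (by positivity)]
        ring

lemma GrowthLE.exists_sum_rpow_neg_le_of_lt (hg : GrowthLE g α) (hg1 : ∀ i, 1 ≤ g i) (hβ : 0 ≤ β)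
    (hαβ : α < β) :
    ∃ K, 0 ≤ K ∧ ∀ (x : ℝ) (s : Finset ι), 1 ≤ x → (∀ i ∈ s, x ≤ g i) →
      ∑ i ∈ s, g i ^ (-β) ≤ K * x ^ (α - β) := by
  obtain ⟨A, hA, hsum⟩ := hg.exists_sum_rpow_neg_le_geom hg1 hβ
  set r := (2 : ℝ) ^ (α - β) with hr
  have hr0 : 0 < r := by positivity
  have hr1 : 0 < 1 - r :=
    sub_pos.2 (Real.rpow_lt_one_of_one_lt_of_neg one_lt_two (sub_neg.2 hαβ))
  refine ⟨A * (1 / (r * (1 - r))), by positivity, fun x s hx hs ↦ ?_⟩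
  set J := Finset.Ico (dyadicLevel x) (s.sup (dyadicLevel ∘ g) + 1)
  have hJ : ∀ i ∈ s, dyadicLevel (g i) ∈ J := fun i hi ↦
    Finset.mem_Ico.2 ⟨dyadicLevel_mono (hs i hi),
      Nat.lt_succ_of_le (Finset.le_sup (f := dyadicLevel ∘ g) hi)⟩
  have hfirst : r ^ (dyadicLevel x + 1) ≤ x ^ (α - β) := by
    rw [hr, Real.rpow_pow_comm zero_le_two]
    exact Real.rpow_le_rpow_of_nonpos (by linarith)
      (lt_two_pow_dyadicLevel_succ (by linarith)).le (by linarith)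
  calc ∑ i ∈ s, g i ^ (-β) ≤ A * ∑ j ∈ J, r ^ j := hsum s J hJ
    _ ≤ A * (r ^ dyadicLevel x / (1 - r)) := by
        gcongr
        exact geom_sum_Ico_le_of_lt_one hr0.le (sub_pos.1 hr1)
    _ = A * (1 / (r * (1 - r))) * r ^ (dyadicLevel x + 1) := by
        rw [pow_succ]
        field_simp
    _ ≤ A * (1 / (r * (1 - r))) * x ^ (α - β) := by gcongr

lemma GrowthLE.summable_rpow_neg (hg : GrowthLE g α) (hg1 : ∀ i, 1 ≤ g i) (hβ : 0 ≤ β)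
    (hαβ : α < β) : Summable fun i ↦ g i ^ (-β) := by
  obtain ⟨K, -, hK⟩ := hg.exists_sum_rpow_neg_le_of_lt hg1 hβ hαβ
  exact summable_of_sum_le (fun i ↦ Real.rpow_nonneg (zero_le_one.trans (hg1 i)) _)
    fun s ↦ hK 1 s le_rfl fun i _ ↦ hg1 i

lemma GrowthLE.tsum_sub_sum_sublevel_isBigO (hg : GrowthLE g α) (hg1 : ∀ i, 1 ≤ g i) (hβ : 0 ≤ β)
    (hαβ : α < β) :
    (fun x ↦ ∑' i, g i ^ (-β) - ∑ i ∈ sublevel g x, g i ^ (-β)) =O[𝓟 (Ici 1)]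
      fun x ↦ x ^ (α - β) := by
  have hnonneg (i : ι) : 0 ≤ g i ^ (-β) := Real.rpow_nonneg (zero_le_one.trans (hg1 i)) _
  have hsummable := hg.summable_rpow_neg hg1 hβ hαβ
  obtain ⟨K, -, hK⟩ := hg.exists_sum_rpow_neg_le_of_lt hg1 hβ hαβ
  refine isBigO_of_abs_le K (fun x hx ↦ ?_) fun x hx ↦ by positivity
  rw [abs_of_nonneg (sub_nonneg.2 (hsummable.sum_le_tsum _ fun i _ ↦ hnonneg i)),
    ← hsummable.sum_add_tsum_compl (s := sublevel g x), add_sub_cancel_left]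
  refine (hsummable.subtype _).tsum_le_of_sum_le fun s ↦ ?_
  refine (Finset.sum_map s (Function.Embedding.subtype _) fun i ↦ g i ^ (-β)).symm.trans_le ?_
  refine hK x _ hx fun i hi ↦ ?_
  obtain ⟨⟨j, hj⟩, -, rfl⟩ := Finset.mem_map.1 hi
  exact (lt_of_not_ge fun hle ↦ hj ((mem_sublevel hg.finite_le).2 hle)).le

lemma GrowthLE.dyadicLevel_mem_range (hg : GrowthLE g α) {x : ℝ} {i : ι} (hi : i ∈ sublevel g x) :
    dyadicLevel (g i) ∈ Finset.range (dyadicLevel x + 1) :=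
  Finset.mem_range.2 (Nat.lt_succ_of_le (dyadicLevel_mono ((mem_sublevel hg.finite_le).1 hi)))

lemma GrowthLE.sum_sublevel_isBigO_of_gt (hg : GrowthLE g α) (hg1 : ∀ i, 1 ≤ g i) (hβ : 0 ≤ β)
    (hβα : β < α) :
    (fun x ↦ ∑ i ∈ sublevel g x, g i ^ (-β)) =O[𝓟 (Ici 1)] fun x ↦ x ^ (α - β) := by
  obtain ⟨A, hA, hsum⟩ := hg.exists_sum_rpow_neg_le_geom hg1 hβ
  set r := (2 : ℝ) ^ (α - β) with hr
  have : 0 < r := by positivity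
  have hr1 : 0 < r - 1 := sub_pos.2 (Real.one_lt_rpow one_lt_two (sub_pos.2 hβα))
  refine isBigO_of_abs_le (A * (r / (r - 1))) (fun x hx ↦ ?_) fun x hx ↦ by positivity
  have hlast : r ^ dyadicLevel x ≤ x ^ (α - β) := by
    rw [hr, Real.rpow_pow_comm zero_le_two]
    exact Real.rpow_le_rpow (by positivity) (two_pow_dyadicLevel_le hx) (by linarith)
  rw [abs_of_nonneg (Finset.sum_nonneg fun i _ ↦
    Real.rpow_nonneg (zero_le_one.trans (hg1 i)) _)]
  calc ∑ i ∈ sublevel g x, g i ^ (-β) ≤ A * ∑ j ∈ Finset.range (dyadicLevel x + 1), r ^ j :=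
        hsum _ _ fun i hi ↦ hg.dyadicLevel_mem_range hi
    _ ≤ A * (r ^ (dyadicLevel x + 1) / (r - 1)) := by
        rw [geom_sum_eq (sub_pos.1 hr1).ne']
        gcongr
        exact sub_le_self _ zero_le_one
    _ = A * (r / (r - 1)) * r ^ dyadicLevel x := by ring
    _ ≤ A * (r / (r - 1)) * x ^ (α - β) := by gcongr

lemma GrowthLE.sum_sublevel_isBigO_one_add_log (hg : GrowthLE g α) (hg1 : ∀ i, 1 ≤ g i)
    (hα : 0 ≤ α) :
    (fun x ↦ ∑ i ∈ sublevel g x, g i ^ (-α)) =O[𝓟 (Ici 1)] fun x ↦ 1 + Real.log x := by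
  obtain ⟨A, hA, hsum⟩ := hg.exists_sum_rpow_neg_le_geom hg1 hα
  refine isBigO_of_abs_le (A * (1 / Real.log 2)) (fun x hx ↦ ?_) fun x hx ↦
    add_nonneg zero_le_one (Real.log_nonneg hx)
  rw [abs_of_nonneg (Finset.sum_nonneg fun i _ ↦
    Real.rpow_nonneg (zero_le_one.trans (hg1 i)) _)]
  have hlog2 : 1 ≤ 1 / Real.log 2 :=
    (one_le_div (Real.log_pos one_lt_two)).2 (Real.log_two_lt_d9.le.trans (by norm_num))
  calc ∑ i ∈ sublevel g x, g i ^ (-α) ≤ A * (dyadicLevel x + 1) := by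
        simpa using hsum _ _ fun i hi ↦ hg.dyadicLevel_mem_range hi
    _ ≤ A * (Real.log x / Real.log 2 + 1 / Real.log 2) := by
        gcongr
        exact dyadicLevel_le_log_div hx
    _ = A * (1 / Real.log 2) * (1 + Real.log x) := by ring

end PolynomialGrowth

section Convolution

variable {ι : Type*} {g : ι → ℝ} {α δ η κ : ℝ} {F : ℝ → ℝ}

lemma sum_div_rpow (hg1 : ∀ i, 1 ≤ g i) (s : Finset ι) {x : ℝ} (hx : 0 ≤ x) (η : ℝ) :
    ∑ i ∈ s, (x / g i) ^ η = x ^ η * ∑ i ∈ s, g i ^ (-η) := by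
  rw [Finset.mul_sum]
  refine Finset.sum_congr rfl fun i _ ↦ ?_
  have hgi : 0 ≤ g i := zero_le_one.trans (hg1 i)
  rw [Real.div_rpow hx hgi, Real.rpow_neg hgi, div_eq_mul_inv]

lemma sum_sublevel_comp_div_isBigO (hfin : ∀ x, {i | g i ≤ x}.Finite) (hg1 : ∀ i, 1 ≤ g i)
    (hF : F =O[𝓟 (Ici 1)] fun z ↦ z ^ η) :
    (fun x ↦ ∑ i ∈ sublevel g x, F (x / g i)) =O[𝓟 (Ici 1)]
      fun x ↦ x ^ η * ∑ i ∈ sublevel g x, g i ^ (-η) := by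
  have hg0 (i : ι) : 0 < g i := zero_lt_one.trans_le (hg1 i)
  obtain ⟨C, -, hC⟩ := exists_abs_le_mul_rpow hF
  refine isBigO_of_abs_le C (fun x hx ↦ ?_) fun x hx ↦
    mul_nonneg (by positivity) (Finset.sum_nonneg fun i _ ↦ (Real.rpow_pos_of_pos (hg0 i) _).le)
  calc |∑ i ∈ sublevel g x, F (x / g i)| ≤ ∑ i ∈ sublevel g x, |F (x / g i)| :=
        Finset.abs_sum_le_sum_abs _ _
    _ ≤ ∑ i ∈ sublevel g x, C * (x / g i) ^ η := Finset.sum_le_sum fun i hi ↦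
        hC _ ((one_le_div (hg0 i)).2 ((mem_sublevel hfin).1 hi))
    _ = C * (x ^ η * ∑ i ∈ sublevel g x, g i ^ (-η)) := by
        rw [← Finset.mul_sum, sum_div_rpow hg1 _ (zero_le_one.trans hx)]

lemma sum_sublevel_isBigO_one (hg1 : ∀ i, 1 ≤ g i) (hsummable : Summable fun i ↦ g i ^ (-η))
    (l : Filter ℝ) : (fun x ↦ ∑ i ∈ sublevel g x, g i ^ (-η)) =O[l] fun _ ↦ (1 : ℝ) := by
  have hnonneg (i : ι) : 0 ≤ g i ^ (-η) := Real.rpow_nonneg (zero_le_one.trans (hg1 i)) _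
  refine .of_bound (∑' i, g i ^ (-η)) (.of_forall fun x ↦ ?_)
  rw [Real.norm_of_nonneg (Finset.sum_nonneg fun i _ ↦ hnonneg i), norm_one, mul_one]
  exact hsummable.sum_le_tsum _ fun i _ ↦ hnonneg i

/-- The order of the error made when a counting function with remainder `z ^ η` is convolved with a
norm of growth `α`: the larger of `x ^ α` and `x ^ η`, with a logarithm when the two agree. -/
def convolutionError (α η x : ℝ) : ℝ :=
  if α < η then x ^ η else if α = η then x ^ α * Real.log x else x ^ α

lemma atTop_le_principal_Ici (a : ℝ) : atTop ≤ 𝓟 (Ici a) :=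
  le_principal_iff.2 (Ici_mem_atTop a)

lemma rpow_mul_rpow_sub_eventuallyEq (α δ : ℝ) :
    (fun x : ℝ ↦ x ^ δ * x ^ (α - δ)) =ᶠ[atTop] fun x ↦ x ^ α := by
  filter_upwards [eventually_gt_atTop 0] with x hx
  rw [← Real.rpow_add hx, add_sub_cancel]

lemma rpow_isBigO_convolutionError (α η : ℝ) :
    (fun x ↦ x ^ α) =O[atTop] convolutionError α η := by
  unfold convolutionError
  split_ifs with hlt heq
  · exact (rpow_isBigO_rpow hlt.le).mono (atTop_le_principal_Ici 1)
  · simpa only [mul_one] using (isBigO_refl (fun x : ℝ ↦ x ^ α) atTop).mul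
      (Real.isLittleO_const_log_atTop (c := 1)).isBigO
  · exact isBigO_refl _ _

lemma GrowthLE.rpow_mul_sum_sublevel_isBigO_convolutionError (hg : GrowthLE g α)
    (hg1 : ∀ i, 1 ≤ g i) (hη : 0 ≤ η) :
    (fun x ↦ x ^ η * ∑ i ∈ sublevel g x, g i ^ (-η)) =O[atTop] convolutionError α η := by
  unfold convolutionError
  have hη_refl : (fun x : ℝ ↦ x ^ η) =O[atTop] fun x ↦ x ^ η := isBigO_refl _ _
  rcases lt_trichotomy α η with hlt | rfl | hgt
  · simpa only [if_pos hlt, mul_one] using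
      hη_refl.mul (sum_sublevel_isBigO_one hg1 (hg.summable_rpow_neg hg1 hη hlt) _)
  · have hlog : (fun x ↦ ∑ i ∈ sublevel g x, g i ^ (-α)) =O[atTop] Real.log :=
      ((hg.sum_sublevel_isBigO_one_add_log hg1 hη).mono (atTop_le_principal_Ici 1)).trans
        (Real.isLittleO_const_log_atTop.isBigO.add (isBigO_refl _ _))
    simpa only [lt_irrefl, if_false, if_true] using hη_refl.mul hlog
  · simp only [if_neg hgt.not_gt, if_neg hgt.ne']
    have hsum := (hg.sum_sublevel_isBigO_of_gt hg1 hη hgt).mono (atTop_le_principal_Ici 1)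
    exact (hη_refl.mul hsum).trans_eventuallyEq (rpow_mul_rpow_sub_eventuallyEq α η)

theorem GrowthLE.convolution_isBigO (hg : GrowthLE g α) (hg1 : ∀ i, 1 ≤ g i) (hδ : 0 ≤ δ)
    (hη : 0 ≤ η) (hαδ : α < δ)
    (hF : (fun z ↦ F z - κ * z ^ δ) =O[𝓟 (Ici 1)] fun z ↦ z ^ η) :
    (fun x ↦ ∑ i ∈ sublevel g x, F (x / g i) - κ * (∑' i, g i ^ (-δ)) * x ^ δ) =O[atTop]
      convolutionError α η := by
  have hremainder : (fun x ↦ ∑ i ∈ sublevel g x, (F (x / g i) - κ * (x / g i) ^ δ)) =O[atTop]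
      convolutionError α η :=
    ((sum_sublevel_comp_div_isBigO hg.finite_le hg1 hF).mono (atTop_le_principal_Ici 1)).trans
      (hg.rpow_mul_sum_sublevel_isBigO_convolutionError hg1 hη)
  have htail : (fun x ↦ κ * x ^ δ * (∑' i, g i ^ (-δ) - ∑ i ∈ sublevel g x, g i ^ (-δ))) =O[atTop]
      convolutionError α η :=
    (((isBigO_refl _ _).const_mul_left κ).mul
      ((hg.tsum_sub_sum_sublevel_isBigO hg1 hδ hαδ).mono (atTop_le_principal_Ici 1))).trans
        ((rpow_mul_rpow_sub_eventuallyEq α δ).trans_isBigO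
          (rpow_isBigO_convolutionError α η))
  refine (hremainder.sub htail).congr' ?_ .rfl
  filter_upwards [eventually_ge_atTop 0] with x hx
  rw [Finset.sum_sub_distrib, ← Finset.mul_sum, sum_div_rpow hg1 _ hx]
  ring

end Convolution

section EulerProduct

variable {P : Type*} {T : Finset ℕ}

/-- The elements of the free abelian monoid on `P` all of whose multiplicities lie in `T`. -/
abbrev MultiplicitiesIn (P : Type*) (T : Finset ℕ) : Type _ := {b : P →₀ ℕ // ∀ p, b p ∈ T}

/-- The elements with multiplicities in `T` whose support is contained in the finite set `S`; they
index the expansion of a finite Euler product over `S`. -/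
def supportedIn (T : Finset ℕ) (S : Finset P) : Finset (MultiplicitiesIn P T) :=
  (S.finsupp fun _ ↦ T).subtype fun b ↦ ∀ p, b p ∈ T

lemma mem_supportedIn {S : Finset P} {b : MultiplicitiesIn P T} :
    b ∈ supportedIn T S ↔ b.1.support ⊆ S := by
  simp only [supportedIn, Finset.mem_subtype, Finset.mem_finsupp_iff]
  exact ⟨fun hb ↦ hb.1, fun hb ↦ ⟨hb, fun p _ ↦ b.2 p⟩⟩

lemma prod_sum_eq_sum_supportedIn {R : Type*} [CommSemiring R] (hT : 0 ∈ T) {f : P → ℕ → R}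
    (hf : ∀ p, f p 0 = 1) (S : Finset P) :
    ∏ p ∈ S, ∑ k ∈ T, f p k = ∑ b ∈ supportedIn T S, b.1.prod f := by
  have hmultiplicities : ∀ b ∈ S.finsupp fun _ ↦ T, ∀ p, b p ∈ T := fun b hb p ↦ by
    obtain ⟨hsupport, hmem⟩ := Finset.mem_finsupp_iff.1 hb
    by_cases hp : p ∈ S
    · exact hmem p hp
    · rwa [Finsupp.notMem_support_iff.1 fun h ↦ hp (hsupport h)]
  rw [supportedIn, Finset.sum_subtype_of_mem (fun b : P →₀ ℕ ↦ b.prod f) hmultiplicities,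
    Finset.prod_sum, Finset.finsupp, Finset.sum_map]
  refine Finset.sum_congr rfl fun φ _ ↦ ?_
  rw [Function.Embedding.coeFn_mk, Finsupp.prod_of_support_subset _
    (Finsupp.support_indicator_subset _ _) _ fun p _ ↦ hf p, ← Finset.prod_attach S]
  exact Finset.prod_congr rfl fun p _ ↦ by rw [Finsupp.indicator_of_mem p.2]

variable {f : P → ℕ → ℝ}

lemma summable_finsupp_prod (hT : 0 ∈ T) (hf : ∀ p, f p 0 = 1) (hf0 : ∀ p k, 0 ≤ f p k)
    (hsummable : Summable fun p ↦ ∑ k ∈ T.erase 0, f p k) :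
    Summable fun b : MultiplicitiesIn P T ↦ b.1.prod f := by
  have hnonneg (b : MultiplicitiesIn P T) : 0 ≤ b.1.prod f :=
    Finset.prod_nonneg fun p _ ↦ hf0 p _
  have htail_nonneg (p : P) : 0 ≤ ∑ k ∈ T.erase 0, f p k := Finset.sum_nonneg fun k _ ↦ hf0 p k
  refine summable_of_sum_le (c := Real.exp (∑' p, ∑ k ∈ T.erase 0, f p k)) hnonneg fun u ↦ ?_
  set S := u.sup fun b ↦ b.1.support
  have huS : u ⊆ supportedIn T S := fun b hb ↦
    mem_supportedIn.2 (Finset.le_sup (f := fun b : MultiplicitiesIn P T ↦ b.1.support) hb)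
  calc ∑ b ∈ u, b.1.prod f ≤ ∑ b ∈ supportedIn T S, b.1.prod f :=
        Finset.sum_le_sum_of_subset_of_nonneg huS fun b _ _ ↦ hnonneg b
    _ = ∏ p ∈ S, (1 + ∑ k ∈ T.erase 0, f p k) := by
        rw [← prod_sum_eq_sum_supportedIn hT hf]
        exact Finset.prod_congr rfl fun p _ ↦ by rw [← hf p, Finset.add_sum_erase _ _ hT]
    _ ≤ Real.exp (∑ p ∈ S, ∑ k ∈ T.erase 0, f p k) :=
        Real.prod_one_add_le_exp_sum _ fun p ↦ htail_nonneg p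
    _ ≤ Real.exp (∑' p, ∑ k ∈ T.erase 0, f p k) :=
        Real.exp_le_exp.2 (hsummable.sum_le_tsum _ fun p _ ↦ htail_nonneg p)

lemma hasProd_sum_tsum_finsupp_prod (hT : 0 ∈ T) (hf : ∀ p, f p 0 = 1)
    (hsummable : Summable fun b : MultiplicitiesIn P T ↦ b.1.prod f) :
    HasProd (fun p ↦ ∑ k ∈ T, f p k) (∑' b : MultiplicitiesIn P T, b.1.prod f) := by
  have hmono : Monotone fun S : Finset P ↦ supportedIn T S := fun S S' hSS' b hb ↦
    mem_supportedIn.2 ((mem_supportedIn.1 hb).trans hSS')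
  have hexhaust : Tendsto (fun S : Finset P ↦ supportedIn T S) atTop atTop :=
    tendsto_atTop_finset_of_monotone hmono fun b ↦ ⟨b.1.support, mem_supportedIn.2 subset_rfl⟩
  have htendsto := hsummable.hasSum
  rw [HasSum, SummationFilter.unconditional_filter] at htendsto
  rw [HasProd, SummationFilter.unconditional_filter]
  exact (htendsto.comp hexhaust).congr fun S ↦ (prod_sum_eq_sum_supportedIn hT hf S).symm

end EulerProduct

section Norm

variable {P : Type*} {N : P → ℕ}

lemma Nm_add (N : P → ℕ) (a b : P →₀ ℕ) : Nm N (a + b) = Nm N a * Nm N b :=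
  Finsupp.prod_add_index' (fun _ ↦ pow_zero _) fun _ _ _ ↦ pow_add _ _ _

lemma Nm_smul (N : P → ℕ) (k : ℕ) (a : P →₀ ℕ) : Nm N (k • a) = Nm N a ^ k := by
  induction k with
  | zero => simp [Nm]
  | succ k ih => rw [succ_nsmul, Nm_add, ih, pow_succ]

lemma Nm_single_one (N : P → ℕ) (p : P) : Nm N (Finsupp.single p 1) = N p := by
  simp [Nm]

lemma one_le_Nm (hN : ∀ p, 2 ≤ N p) (a : P →₀ ℕ) : (1 : ℝ) ≤ Nm N a := by
  have hpos : 0 < Nm N a := Finset.prod_pos fun p _ ↦ pow_pos (two_pos.trans_le (hN p)) _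
  exact_mod_cast hpos

lemma Nm_rpow (N : P → ℕ) (a : P →₀ ℕ) (c : ℝ) :
    (Nm N a : ℝ) ^ c = a.prod fun p k ↦ ((N p : ℝ) ^ k) ^ c := by
  simp only [Nm, Finsupp.prod, Nat.cast_prod, Nat.cast_pow]
  exact (Real.finsetProd_rpow _ _ (fun p _ ↦ by positivity) c).symm

lemma Nm_smul_add_le_iff (hN : ∀ p, 2 ≤ N p) {h : ℕ} (hh : h ≠ 0) (x : ℝ) (a b : P →₀ ℕ) :
    (Nm N (h • a + b) : ℝ) ≤ x ↔
      (Nm N b : ℝ) ≤ x ∧ (Nm N a : ℝ) ≤ (x / Nm N b) ^ (1 / (h : ℝ)) := by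
  have ha := one_le_Nm hN a
  have hb : (0 : ℝ) < Nm N b := zero_lt_one.trans_le (one_le_Nm hN b)
  have hnorm : (Nm N (h • a + b) : ℝ) = (Nm N a : ℝ) ^ h * Nm N b := by
    rw [Nm_add, Nm_smul]
    push_cast
    rfl
  have hle : (Nm N b : ℝ) ≤ (Nm N a : ℝ) ^ h * Nm N b :=
    le_mul_of_one_le_left hb.le (one_le_pow₀ ha)
  rw [hnorm, ← and_iff_right_of_imp fun hx ↦ hle.trans hx]
  refine and_congr_right fun hbx ↦ ?_
  rw [one_div, Real.le_rpow_inv_iff_of_pos (by positivity) (div_nonneg (hb.le.trans hbx) hb.le)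
    (by positivity), Real.rpow_natCast, le_div_iff₀ hb]

lemma finite_multiplicitiesIn_Nm_le (hfin : ∀ x : ℝ, {m : P →₀ ℕ | (Nm N m : ℝ) ≤ x}.Finite)
    (T : Finset ℕ) (x : ℝ) : {b : MultiplicitiesIn P T | (Nm N b.1 : ℝ) ≤ x}.Finite :=
  (hfin x).preimage Subtype.val_injective.injOn

end Norm

section StarCondition

variable {P : Type*} {N : P → ℕ} {κ θ : ℝ}

lemma rpow_isLittleO_rpow {a b : ℝ} (hab : a < b) :
    (fun x : ℝ ↦ x ^ a) =o[atTop] fun x ↦ x ^ b := by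
  have hquotient : (fun x : ℝ ↦ x ^ (-(b - a))) =ᶠ[atTop] fun x ↦ x ^ a / x ^ b := by
    filter_upwards [eventually_gt_atTop 0] with x hx
    rw [← Real.rpow_sub hx, neg_sub]
  refine isLittleO_of_tendsto' ?_
    ((tendsto_rpow_neg_atTop (sub_pos.2 hab)).congr' hquotient)
  filter_upwards [eventually_gt_atTop 0] with x hx hzero
  exact absurd hzero (Real.rpow_pos_of_pos hx b).ne'

lemma isBigO_principal_Ici_of_atTop {f : ℝ → ℝ} (hθ : 0 ≤ θ) (hf : f =O[atTop] fun x ↦ x ^ θ)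
    (hbounded : ∀ R, f =O[𝓟 (Icc 1 R)] fun _ ↦ (1 : ℝ)) :
    f =O[𝓟 (Ici 1)] fun x ↦ x ^ θ := by
  obtain ⟨C, hC⟩ := hf.bound
  obtain ⟨R, hR⟩ := eventually_atTop.1 hC
  have hone : (fun _ ↦ (1 : ℝ)) =O[𝓟 (Icc 1 R)] fun x ↦ x ^ θ :=
    isBigO_principal.2 ⟨1, fun x hx ↦ by
      simpa using (Real.one_le_rpow hx.1 hθ).trans (le_abs_self _)⟩
  have hlarge : f =O[𝓟 (Ici R)] fun x ↦ x ^ θ := isBigO_principal.2 ⟨C, hR⟩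
  refine (((hbounded R).trans hone).sup hlarge).mono ?_
  rw [sup_principal, principal_mono]
  exact fun x hx ↦ (le_total x R).imp (fun hxR ↦ ⟨hx, hxR⟩) id

/-- The counting function `I(y)` of the monoid. -/
def normCount (N : P → ℕ) (y : ℝ) : ℕ := {m : P →₀ ℕ | (Nm N m : ℝ) ≤ y}.ncard

lemma StarCond.finite_Nm_le (hstar : StarCond N κ θ) (x : ℝ) :
    {m : P →₀ ℕ | (Nm N m : ℝ) ≤ x}.Finite := by
  obtain ⟨hκ, -, hθ1, hO⟩ := hstar
  -- An infinite sublevel set has `ncard` zero, so `κ * y` itself would be `O(y ^ θ)`.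
  by_contra hinf
  have hcount : (fun y : ℝ ↦ ({m : P →₀ ℕ | (Nm N m : ℝ) ≤ y}.ncard : ℝ) - κ * y) =ᶠ[atTop]
      fun y ↦ -κ * y ^ (1 : ℝ) := by
    filter_upwards [eventually_ge_atTop x] with y hy
    have hinf_y : {m : P →₀ ℕ | (Nm N m : ℝ) ≤ y}.Infinite :=
      Set.Infinite.mono (fun m hm ↦ le_trans hm hy) hinf
    rw [hinf_y.ncard, Nat.cast_zero, zero_sub, Real.rpow_one, neg_mul]
  have hlinear : (fun y : ℝ ↦ y ^ (1 : ℝ)) =O[atTop] fun y ↦ y ^ θ :=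
    (isBigO_const_mul_left_iff (neg_ne_zero.2 hκ.ne')).1 (hcount.symm.trans_isBigO hO)
  refine isLittleO_irrefl ?_ (hlinear.trans_isLittleO (rpow_isLittleO_rpow hθ1))
  simpa using (eventually_ne_atTop (0 : ℝ)).frequently

lemma StarCond.normCount_sub_isBigO (hstar : StarCond N κ θ) :
    (fun y ↦ (normCount N y : ℝ) - κ * y) =O[𝓟 (Ici 1)] fun y ↦ y ^ θ := by
  refine isBigO_principal_Ici_of_atTop hstar.2.1 hstar.2.2.2 fun R ↦
    isBigO_principal.2 ⟨normCount N R + |κ| * R, fun y hy ↦ ?_⟩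
  have hmono : normCount N y ≤ normCount N R :=
    Set.ncard_le_ncard (fun m hm ↦ le_trans hm hy.2) (hstar.finite_Nm_le R)
  rw [norm_one, mul_one]
  calc ‖(normCount N y : ℝ) - κ * y‖ ≤ normCount N y + |κ| * y := by
        simpa [abs_mul, abs_of_nonneg (zero_le_one.trans hy.1)] using
          norm_sub_le (normCount N y : ℝ) (κ * y)
    _ ≤ normCount N R + |κ| * R := by
        gcongr
        exact hy.2

lemma StarCond.normCount_isBigO (hstar : StarCond N κ θ) :
    (fun y ↦ (normCount N y : ℝ)) =O[𝓟 (Ici 1)] fun y ↦ y ^ (1 : ℝ) := by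
  simpa using (hstar.normCount_sub_isBigO.trans (rpow_isBigO_rpow hstar.2.2.1.le)).add
    ((isBigO_refl (fun y : ℝ ↦ y ^ (1 : ℝ)) _).const_mul_left κ)

lemma StarCond.growthLE_Nm (hstar : StarCond N κ θ) :
    GrowthLE (fun m : P →₀ ℕ ↦ (Nm N m : ℝ)) 1 :=
  ⟨hstar.finite_Nm_le, by
    simp only [card_sublevel]
    exact hstar.normCount_isBigO⟩

lemma StarCond.growthLE_prime (hstar : StarCond N κ θ) : GrowthLE (fun p ↦ (N p : ℝ)) 1 := by
  simpa only [Function.comp_def, Nm_single_one] using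
    hstar.growthLE_Nm.comp_injective (Finsupp.single_left_injective one_ne_zero)

end StarCondition

section Decomposition

variable {P : Type*} {N : P → ℕ} {h : ℕ}

/-- The multiplicities of the `h`-full elements from which no `h`-th power can be split off with an
`h`-full quotient. -/
def fullExponents (h : ℕ) : Finset ℕ := insert 0 (Finset.Ioo h (2 * h))

/-- The element of `fullExponents h` congruent to `n` modulo `h`. -/
def fullResidue (h n : ℕ) : ℕ := if n % h = 0 then 0 else h + n % h

lemma mem_fullExponents {n : ℕ} : n ∈ fullExponents h ↔ n = 0 ∨ h < n ∧ n < 2 * h := by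
  simp [fullExponents]

lemma zero_mem_fullExponents (h : ℕ) : 0 ∈ fullExponents h :=
  Finset.mem_insert_self _ _

lemma fullResidue_zero (h : ℕ) : fullResidue h 0 = 0 := by
  simp [fullResidue]

lemma fullResidue_mem_fullExponents (hh : h ≠ 0) (n : ℕ) : fullResidue h n ∈ fullExponents h := by
  have hlt := Nat.mod_lt n (Nat.pos_of_ne_zero hh)
  rw [fullResidue, mem_fullExponents]
  split_ifs <;> omega

lemma fullResidue_mul_add (a : ℕ) {b : ℕ} (hb : b ∈ fullExponents h) :
    fullResidue h (h * a + b) = b := by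
  rw [fullResidue, Nat.mul_add_mod]
  rcases mem_fullExponents.1 hb with rfl | ⟨hlt, hlt_two⟩
  · simp
  · rw [Nat.mod_eq_sub_mod hlt.le, Nat.mod_eq_of_lt (by omega), if_neg (by omega)]
    omega

lemma mul_div_add_fullResidue {n : ℕ} (hn : n = 0 ∨ h ≤ n) :
    h * ((n - fullResidue h n) / h) + fullResidue h n = n := by
  have hle : fullResidue h n ≤ n := by
    rcases hn with rfl | hn
    · exact (fullResidue_zero h).le
    · have hmod := Nat.mod_le (n - h) h
      rw [← Nat.mod_eq_sub_mod hn] at hmod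
      rw [fullResidue]
      split_ifs <;> omega
  have hmodEq : fullResidue h n ≡ n [MOD h] := by
    rw [fullResidue]
    split_ifs with hzero
    · exact hzero.symm
    · simp [Nat.ModEq]
  rw [Nat.mul_div_cancel' ((Nat.modEq_iff_dvd' hle).1 hmodEq), Nat.sub_add_cancel hle]

lemma hFull_smul_add (a : P →₀ ℕ) (b : MultiplicitiesIn P (fullExponents h)) :
    HFull h (h • a + b.1) := fun p ↦ by
  rw [Finsupp.add_apply, Finsupp.smul_apply, smul_eq_mul]
  rcases mem_fullExponents.1 (b.2 p) with hzero | hlt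
  · rcases Nat.eq_zero_or_pos (a p) with ha | ha
    · simp [ha, hzero]
    · exact .inr ((Nat.le_mul_of_pos_right h ha).trans (Nat.le_add_right _ _))
  · exact .inr (hlt.1.le.trans (Nat.le_add_left _ _))

lemma smul_add_injective (hh : h ≠ 0) :
    Function.Injective fun q : (P →₀ ℕ) × MultiplicitiesIn P (fullExponents h) ↦
      h • q.1 + q.2.1 := by
  rintro ⟨a, b⟩ ⟨a', b'⟩ heq
  have happly (p : P) : h * a p + b.1 p = h * a' p + b'.1 p := by
    simpa using DFunLike.congr_fun heq p
  have hb (p : P) : b.1 p = b'.1 p := by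
    rw [← fullResidue_mul_add (a p) (b.2 p), happly, fullResidue_mul_add _ (b'.2 p)]
  have ha (p : P) : a p = a' p :=
    Nat.eq_of_mul_eq_mul_left (Nat.pos_of_ne_zero hh) (by have := happly p; have := hb p; omega)
  exact Prod.ext (Finsupp.ext ha) (Subtype.ext (Finsupp.ext hb))

lemma HFull.exists_smul_add (hh : h ≠ 0) {m : P →₀ ℕ} (hm : HFull h m) :
    ∃ (a : P →₀ ℕ) (b : MultiplicitiesIn P (fullExponents h)), h • a + b.1 = m := by
  refine ⟨m.mapRange (fun n ↦ (n - fullResidue h n) / h) (by simp),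
    ⟨m.mapRange (fullResidue h) (fullResidue_zero h), fun p ↦ ?_⟩, ?_⟩
  · rw [Finsupp.mapRange_apply]
    exact fullResidue_mem_fullExponents hh (m p)
  · ext p
    simpa using mul_div_add_fullResidue (hm p)

lemma ncard_hFull_eq_sum (hN : ∀ p, 2 ≤ N p)
    (hfin : ∀ x : ℝ, {m : P →₀ ℕ | (Nm N m : ℝ) ≤ x}.Finite) (hh : h ≠ 0) (x : ℝ) :
    {m : P →₀ ℕ | HFull h m ∧ (Nm N m : ℝ) ≤ x}.ncard =
      ∑ b ∈ sublevel (fun b : MultiplicitiesIn P (fullExponents h) ↦ (Nm N b.1 : ℝ)) x,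
        normCount N ((x / Nm N b.1) ^ (1 / (h : ℝ))) := by
  have hfin_b := finite_multiplicitiesIn_Nm_le hfin (fullExponents h)
  have hfin_full : {m : P →₀ ℕ | HFull h m ∧ (Nm N m : ℝ) ≤ x}.Finite :=
    (hfin x).subset fun m hm ↦ hm.2
  simp only [normCount, ← card_sublevel]
  rw [Set.ncard_eq_toFinset_card _ hfin_full, ← Finset.card_sigma]
  refine (Finset.card_bij (fun q _ ↦ h • q.2 + q.1.1) ?_ ?_ ?_).symm
  · rintro ⟨b, a⟩ hq
    simp only [Finset.mem_sigma, mem_sublevel hfin_b, mem_sublevel hfin] at hq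
    exact hfin_full.mem_toFinset.2 ⟨hFull_smul_add a b, (Nm_smul_add_le_iff hN hh x a b.1).2 hq⟩
  · rintro ⟨b, a⟩ - ⟨b', a'⟩ - heq
    obtain ⟨rfl, rfl⟩ := Prod.mk.inj (smul_add_injective hh (a₁ := (a, b)) (a₂ := (a', b')) heq)
    rfl
  · intro m hm
    obtain ⟨hm_full, hm_le⟩ := hfin_full.mem_toFinset.1 hm
    obtain ⟨a, b, rfl⟩ := hm_full.exists_smul_add hh
    refine ⟨⟨b, a⟩, ?_, rfl⟩
    simpa only [Finset.mem_sigma, mem_sublevel hfin_b, mem_sublevel hfin] using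
      (Nm_smul_add_le_iff hN hh x a b.1).1 hm_le

end Decomposition

section MainTerm

variable {P : Type*} {N : P → ℕ} {κ θ : ℝ} {h : ℕ}

lemma sum_fullExponents_eq {n : ℕ} (hn : 2 ≤ n) (hh : h ≠ 0) :
    ∑ k ∈ fullExponents h, ((n : ℝ) ^ k) ^ (-(1 / (h : ℝ))) =
      1 + ((n : ℝ) - (n : ℝ) ^ (1 / (h : ℝ))) /
        ((n : ℝ) ^ 2 * ((n : ℝ) ^ (1 / (h : ℝ)) - 1)) := by
  have hn1 : (1 : ℝ) < n := by exact_mod_cast hn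
  set u := (n : ℝ) ^ (1 / (h : ℝ)) with hu
  have hu1 : 1 < u := Real.one_lt_rpow hn1 (by positivity)
  have hun : u ^ h = n := by
    rw [hu, one_div]
    exact Real.rpow_inv_natCast_pow (by positivity) hh
  have hterm (k : ℕ) : ((n : ℝ) ^ k) ^ (-(1 / (h : ℝ))) = u⁻¹ ^ k := by
    rw [Real.rpow_neg (by positivity), ← Real.rpow_pow_comm (by positivity), inv_pow]
  have hu_inv : u⁻¹ - 1 ≠ 0 := sub_ne_zero.2 (inv_lt_one_of_one_lt₀ hu1).ne
  have hu_sub : u - 1 ≠ 0 := (sub_pos.2 hu1).ne'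
  have hu0 : u ≠ 0 := (zero_lt_one.trans hu1).ne'
  simp only [hterm]
  rw [fullExponents, Finset.sum_insert (by simp), pow_zero, ← Finset.Ico_add_one_left_eq_Ioo,
    geom_sum_Ico (sub_ne_zero.1 hu_inv) (by omega), ← hun]
  congr 1
  rw [div_eq_div_iff hu_inv (mul_ne_zero (by positivity) hu_sub), two_mul, pow_add, pow_succ,
    inv_pow]
  field_simp
  ring

lemma StarCond.summable_prime_sum_fullExponents (hN : ∀ p, 2 ≤ N p) (hstar : StarCond N κ θ)
    (h : ℕ) :
    Summable fun p ↦ ∑ k ∈ (fullExponents h).erase 0, ((N p : ℝ) ^ k) ^ (-(1 / (h : ℝ))) := by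
  refine summable_sum fun k hk ↦ ?_
  obtain ⟨hk0, hk_mem⟩ := Finset.mem_erase.1 hk
  obtain ⟨hlt, hlt_two⟩ := (mem_fullExponents.1 hk_mem).resolve_left hk0
  have hh : (0 : ℝ) < h := by exact_mod_cast (by omega : 0 < h)
  have hexponent : 1 < (k : ℝ) / h := (one_lt_div hh).2 (by exact_mod_cast hlt)
  refine (hstar.growthLE_prime.summable_rpow_neg (β := k / h)
    (fun p ↦ by exact_mod_cast one_le_two.trans (hN p)) (by positivity) hexponent).congr fun p ↦ ?_
  rw [← Real.rpow_natCast, ← Real.rpow_mul (by positivity)]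
  congr 1
  ring

lemma StarCond.summable_Nm_rpow_neg (hN : ∀ p, 2 ≤ N p) (hstar : StarCond N κ θ) (h : ℕ) :
    Summable fun b : MultiplicitiesIn P (fullExponents h) ↦ (Nm N b.1 : ℝ) ^ (-(1 / (h : ℝ))) := by
  simp only [Nm_rpow]
  exact summable_finsupp_prod (zero_mem_fullExponents h) (fun p ↦ by simp)
    (fun p k ↦ by positivity) (hstar.summable_prime_sum_fullExponents hN h)

lemma StarCond.gammah_eq_tsum (hN : ∀ p, 2 ≤ N p) (hstar : StarCond N κ θ) (hh : h ≠ 0) :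
    gammah N h =
      ∑' b : MultiplicitiesIn P (fullExponents h), (Nm N b.1 : ℝ) ^ (-(1 / (h : ℝ))) := by
  have hsummable := hstar.summable_Nm_rpow_neg hN h
  simp only [Nm_rpow] at hsummable ⊢
  rw [← (hasProd_sum_tsum_finsupp_prod (zero_mem_fullExponents h) (fun p ↦ by simp)
    hsummable).tprod_eq, gammah]
  exact tprod_congr fun p ↦ (sum_fullExponents_eq (hN p) hh).symm

end MainTerm

section Counting

variable {P : Type*} {N : P → ℕ} {κ θ : ℝ} {h : ℕ}

lemma isBigO_comp_rpow {f : ℝ → ℝ} {c ρ : ℝ} (hc : 0 ≤ c) (hf : f =O[𝓟 (Ici 1)] fun y ↦ y ^ ρ) :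
    (fun z ↦ f (z ^ c)) =O[𝓟 (Ici 1)] fun z ↦ z ^ (c * ρ) := by
  obtain ⟨C, -, hC⟩ := exists_abs_le_mul_rpow hf
  refine isBigO_of_abs_le C (fun z hz ↦ ?_) fun z hz ↦ by positivity
  rw [Real.rpow_mul (zero_le_one.trans hz)]
  exact hC _ (Real.one_le_rpow hz hc)

lemma StarCond.ncard_hFull_isBigO (hN : ∀ p, 2 ≤ N p) (hstar : StarCond N κ θ) (hh : h ≠ 0) :
    (fun x ↦ ({m : P →₀ ℕ | HFull h m ∧ (Nm N m : ℝ) ≤ x}.ncard : ℝ)) =O[𝓟 (Ici 1)]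
      fun x ↦ x ^ (1 / (h : ℝ)) := by
  have hF : (fun z : ℝ ↦ (normCount N (z ^ (1 / (h : ℝ))) : ℝ)) =O[𝓟 (Ici 1)]
      fun z ↦ z ^ (1 / (h : ℝ)) := by
    simpa only [mul_one] using isBigO_comp_rpow (by positivity) hstar.normCount_isBigO
  have hone (b : MultiplicitiesIn P (fullExponents h)) : (1 : ℝ) ≤ Nm N b.1 := one_le_Nm hN b.1
  have hsum := sum_sublevel_comp_div_isBigO
    (finite_multiplicitiesIn_Nm_le hstar.finite_Nm_le (fullExponents h)) hone hF
  have hbounded := (isBigO_refl (fun x : ℝ ↦ x ^ (1 / (h : ℝ))) (𝓟 (Ici 1))).mul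
    (sum_sublevel_isBigO_one hone (hstar.summable_Nm_rpow_neg hN h) _)
  simp only [ncard_hFull_eq_sum hN hstar.finite_Nm_le hh, Nat.cast_sum]
  simpa only [mul_one] using hsum.trans hbounded

/-- Elements with multiplicities in `fullExponents h` are `(h + 1)`-full. -/
lemma StarCond.growthLE_fullExponents (hN : ∀ p, 2 ≤ N p) (hstar : StarCond N κ θ) (h : ℕ) :
    GrowthLE (fun b : MultiplicitiesIn P (fullExponents h) ↦ (Nm N b.1 : ℝ))
      (1 / ((h : ℝ) + 1)) := by
  refine ⟨finite_multiplicitiesIn_Nm_le hstar.finite_Nm_le _,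
    IsBigO.trans (isBigO_of_le _ fun x ↦ ?_)
      (by simpa using hstar.ncard_hFull_isBigO hN h.succ_ne_zero)⟩
  have hmaps : ∀ b ∈ {b : MultiplicitiesIn P (fullExponents h) | (Nm N b.1 : ℝ) ≤ x},
      b.1 ∈ {m : P →₀ ℕ | HFull (h + 1) m ∧ (Nm N m : ℝ) ≤ x} := fun b hb ↦
    ⟨fun p ↦ (mem_fullExponents.1 (b.2 p)).imp_right And.left, hb⟩
  rw [card_sublevel, Real.norm_natCast, Real.norm_natCast, Nat.cast_le]
  exact Set.ncard_le_ncard_of_injOn _ hmaps Subtype.val_injective.injOn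
    ((hstar.finite_Nm_le x).subset fun m hm ↦ hm.2)

end Counting

lemma eventually_norm_convolutionError_le_RNfull (θ : ℝ) {h : ℕ} (hh : 2 ≤ h) :
    ∀ᶠ x in atTop, ‖convolutionError (1 / ((h : ℝ) + 1)) (θ / h) x‖ ≤ RNfull h θ x := by
  have hh0 : (0 : ℝ) < h := by exact_mod_cast two_pos.trans_le hh
  have hlt_iff : 1 / ((h : ℝ) + 1) < θ / h ↔ (h : ℝ) / (h + 1) < θ := by
    rw [lt_div_iff₀ hh0, one_div_mul_eq_div]
  have heq_iff : 1 / ((h : ℝ) + 1) = θ / h ↔ (h : ℝ) / (h + 1) = θ := by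
    rw [eq_div_iff hh0.ne', one_div_mul_eq_div]
  filter_upwards [eventually_ge_atTop 0, Real.tendsto_log_atTop.eventually_ge_atTop 1]
    with x hx hlog
  simp only [convolutionError, RNfull, hlt_iff, heq_iff]
  have hpow : 0 ≤ x ^ (1 / ((h : ℝ) + 1)) := by positivity
  split_ifs with hlt heq hi hi
  · exact (Real.norm_of_nonneg (by positivity)).le
  · exact (Real.norm_of_nonneg (by positivity)).le
  · exact absurd ⟨1, le_rfl, by omega, by rw [← heq, Nat.cast_one]⟩ hi
  · exact (Real.norm_of_nonneg hpow).trans_le (le_mul_of_one_le_right hpow hlog)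
  · exact (Real.norm_of_nonneg hpow).le

lemma exists_eventually_abs_le_mul_RNfull {f : ℝ → ℝ} {θ : ℝ} {h : ℕ} (hh : 2 ≤ h)
    (hf : f =O[atTop] convolutionError (1 / ((h : ℝ) + 1)) (θ / h)) :
    ∃ C, ∀ᶠ x in atTop, |f x| ≤ C * RNfull h θ x := by
  obtain ⟨C, hC, hbound⟩ := hf.exists_nonneg
  refine ⟨C, ?_⟩
  filter_upwards [hbound.bound, eventually_norm_convolutionError_le_RNfull θ hh] with x hx hle
  exact hx.trans (mul_le_mul_of_nonneg_left hle hC)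

theorem hfull_count_general {P : Type*} {N : P → ℕ} (hN : ∀ p, 2 ≤ N p) {κ θ : ℝ}
    (hstar : StarCond N κ θ) {h : ℕ} (hh : h ≠ 0) :
    (fun x : ℝ ↦ ({m : P →₀ ℕ | HFull h m ∧ (Nm N m : ℝ) ≤ x}.ncard : ℝ)
        - κ * gammah N h * x ^ (1 / (h : ℝ))) =O[atTop]
      convolutionError (1 / ((h : ℝ) + 1)) (θ / h) := by
  have hh0 : (0 : ℝ) < h := by exact_mod_cast Nat.pos_of_ne_zero hh
  have hcount : (fun z : ℝ ↦ (normCount N (z ^ (1 / (h : ℝ))) : ℝ) - κ * z ^ (1 / (h : ℝ)))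
      =O[𝓟 (Ici 1)] fun z ↦ z ^ (θ / h) := by
    simpa only [one_div_mul_eq_div] using
      isBigO_comp_rpow (c := 1 / h) (by positivity) hstar.normCount_sub_isBigO
  simp only [ncard_hFull_eq_sum hN hstar.finite_Nm_le hh, Nat.cast_sum,
    hstar.gammah_eq_tsum hN hh]
  exact (hstar.growthLE_fullExponents hN h).convolution_isBigO (fun b ↦ one_le_Nm hN b.1)
    (by positivity) (div_nonneg hstar.2.1 hh0.le) (one_div_lt_one_div_of_lt hh0 (lt_add_one _))
    hcount

/-- Distribution of `h`-full elements (Theorem 1.1 / `hfullideals`). -/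
theorem hfull_count {P : Type*} [Countable P] (N : P → ℕ) (hN : ∀ p, 2 ≤ N p)
    (κ θ : ℝ) (hstar : StarCond N κ θ) (h : ℕ) (hh : 2 ≤ h) :
    ∃ C : ℝ, ∀ᶠ x : ℝ in atTop,
      |({m : P →₀ ℕ | HFull h m ∧ (Nm N m : ℝ) ≤ x}.ncard : ℝ)
          - κ * gammah N h * x ^ (1 / (h : ℝ))| ≤ C * RNfull h θ x :=
  exists_eventually_abs_le_mul_RNfull hh (hfull_count_general hN hstar (by omega))
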